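/- Let (A,φ) be a connection and Higgs field on ℝ³. Then (A,φ) solves the space-time monopole equation if and only if for every μ ∈ ℂ∖{0} the operators D₁(μ) and D₂(μ) commute, where D₁(μ)E = ½∂_tE + μ∂_zE − (½(A_t + iφ) + μA_z)E and D₂(μ)E = ½∂_tE + μ⁻¹∂_z̄E − (½(A_t − iφ) + μ⁻¹A_z̄)E, i.e. D₁(μ)(D₂(μ)E) = D₂(μ)(D₁(μ)E) for every smooth map E : ℝ³ → M_n(ℂ). -/

import Mathlib

open Matrix Complex
open scoped Matrix ComplexConjugate

attribute [local instance] Matrix.normedAddCommGroup Matrix.normedSpace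

noncomputable section

/-- `n × n` complex matrices. -/
abbrev Mat (n : ℕ) := Matrix (Fin n) (Fin n) ℂ

/-- Space-time `ℝ³` with coordinates `(x, y, t)`. -/
abbrev P3 : Type := ℝ × ℝ × ℝ

section PartialDerivatives

variable {W : Type*} [NormedAddCommGroup W] [NormedSpace ℝ W]

/-- Partial derivative in `x`. -/
def pdx (f : P3 → W) (p : P3) : W := deriv (fun s => f (s, p.2.1, p.2.2)) p.1

/-- Partial derivative in `y`. -/
def pdy (f : P3 → W) (p : P3) : W := deriv (fun s => f (p.1, s, p.2.2)) p.2.1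

/-- Partial derivative in `t`. -/
def pdt (f : P3 → W) (p : P3) : W := deriv (fun s => f (p.1, p.2.1, s)) p.2.2

/-- Light-cone derivative `∂_ξ = ∂_t + ∂_x`. -/
def pdxi (f : P3 → W) (p : P3) : W := pdt f p + pdx f p

/-- Light-cone derivative `∂_η = ∂_t − ∂_x`. -/
def pdeta (f : P3 → W) (p : P3) : W := pdt f p - pdx f p

end PartialDerivatives

/-- `∂_z = ½(∂_x − i ∂_y)`. -/
def pdz {n : ℕ} (f : P3 → Mat n) (p : P3) : Mat n :=
  (2⁻¹ : ℂ) • (pdx f p - Complex.I • pdy f p)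

/-- `∂_z̄ = ½(∂_x + i ∂_y)`. -/
def pdzbar {n : ℕ} (f : P3 → Mat n) (p : P3) : Mat n :=
  (2⁻¹ : ℂ) • (pdx f p + Complex.I • pdy f p)

/-- Commutator `[X, Y] = XY − YX`. -/
def brk {n : ℕ} (X Y : Mat n) : Mat n := X * Y - Y * X

/-- Anti-Hermitian-valued map. -/
def SkewHerm {n : ℕ} (f : P3 → Mat n) : Prop := ∀ p : P3, (f p)ᴴ = -(f p)

/-- The space-time monopole equation `F_{xy} = −∇_tφ`, `F_{xt} = −∇_yφ`, `F_{yt} = ∇_xφ`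
for the connection `(Ax, Ay, At)` and Higgs field `Ph`, at the point `p`. -/
def MonopoleEqAt {n : ℕ} (Ax Ay At Ph : P3 → Mat n) (p : P3) : Prop :=
  (-(pdx Ay p) + pdy Ax p + brk (Ax p) (Ay p) = -(pdt Ph p - brk (At p) (Ph p))) ∧
  (-(pdx At p) + pdt Ax p + brk (Ax p) (At p) = -(pdy Ph p - brk (Ay p) (Ph p))) ∧
  (-(pdy At p) + pdt Ay p + brk (Ay p) (At p) = pdx Ph p - brk (Ax p) (Ph p))

/-- The space-time monopole equation on all of `ℝ³`. -/
def MonopoleEq {n : ℕ} (Ax Ay At Ph : P3 → Mat n) : Prop :=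
  ∀ p : P3, MonopoleEqAt Ax Ay At Ph p

/-- `E` solves the `μ`-linear system for `(A, φ)`. -/
def SolvesMu {n : ℕ} (Ax Ay At Ph : P3 → Mat n) (μ : ℂ) (E : P3 → Mat n) : Prop :=
  ∀ p : P3,
    (2⁻¹ : ℂ) • pdt E p + μ • pdz E p =
      ((2⁻¹ : ℂ) • (At p + Complex.I • Ph p) +
        μ • ((2⁻¹ : ℂ) • (Ax p - Complex.I • Ay p))) * E p ∧
    (2⁻¹ : ℂ) • pdt E p + μ⁻¹ • pdzbar E p =
      ((2⁻¹ : ℂ) • (At p - Complex.I • Ph p) +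
        μ⁻¹ • ((2⁻¹ : ℂ) • (Ax p + Complex.I • Ay p))) * E p

/-- `F` solves the `λ`-linear system for `(A, φ)`. -/
def SolvesLam {n : ℕ} (Ax Ay At Ph : P3 → Mat n) (lm : ℂ) (F : P3 → Mat n) : Prop :=
  ∀ p : P3,
    lm • pdxi F p - pdy F p = (lm • (At p + Ax p) - (Ay p + Ph p)) * F p ∧
    lm⁻¹ • pdeta F p - pdy F p = (lm⁻¹ • (At p - Ax p) - (Ay p - Ph p)) * F p

/-- The operator `D₁(μ) = ½∂_t + μ∂_z − (½(A_t + iφ) + μA_z)`. -/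
def DOneOp {n : ℕ} (Ax Ay At Ph : P3 → Mat n) (μ : ℂ) (E : P3 → Mat n) : P3 → Mat n :=
  fun p =>
    (2⁻¹ : ℂ) • pdt E p + μ • pdz E p -
      ((2⁻¹ : ℂ) • (At p + Complex.I • Ph p) +
        μ • ((2⁻¹ : ℂ) • (Ax p - Complex.I • Ay p))) * E p

/-- The operator `D₂(μ) = ½∂_t + μ⁻¹∂_z̄ − (½(A_t − iφ) + μ⁻¹A_z̄)`. -/
def DTwoOp {n : ℕ} (Ax Ay At Ph : P3 → Mat n) (μ : ℂ) (E : P3 → Mat n) : P3 → Mat n :=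
  fun p =>
    (2⁻¹ : ℂ) • pdt E p + μ⁻¹ • pdzbar E p -
      ((2⁻¹ : ℂ) • (At p - Complex.I • Ph p) +
        μ⁻¹ • ((2⁻¹ : ℂ) • (Ax p + Complex.I • Ay p))) * E p

def Lop {n : ℕ} (a b c : ℂ) (f : P3 → Mat n) (p : P3) : Mat n :=
  a • fderiv ℝ f p (1, 0, 0) + b • fderiv ℝ f p (0, 1, 0) + c • fderiv ℝ f p (0, 0, 1)

def mulB (n : ℕ) : Mat n →L[ℝ] Mat n →L[ℝ] Mat n :=
  LinearMap.toContinuousLinearMap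
    ((LinearMap.toContinuousLinearMap : (Mat n →ₗ[ℝ] Mat n) ≃ₗ[ℝ] (Mat n →L[ℝ] Mat n)).toLinearMap ∘ₗ
      LinearMap.mul ℝ (Mat n))

theorem mulB_apply {n : ℕ} (A B : Mat n) : mulB n A B = A * B := rfl

theorem hasFDerivAt_mulM {n : ℕ} {f g : P3 → Mat n} {p : P3}
    (hf : DifferentiableAt ℝ f p) (hg : DifferentiableAt ℝ g p) (v : P3) :
    fderiv ℝ (fun q => f q * g q) p v = f p * fderiv ℝ g p v + fderiv ℝ f p v * g p := by
  have h := (mulB n).hasFDerivAt_of_bilinear hf.hasFDerivAt hg.hasFDerivAt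
  have h2 : fderiv ℝ (fun q => f q * g q) p = _ := h.fderiv
  rw [h2]
  rfl

theorem contDiff_mulM {n : ℕ} {f g : P3 → Mat n} (hf : ContDiff ℝ (⊤ : ℕ∞) f)
    (hg : ContDiff ℝ (⊤ : ℕ∞) g) : ContDiff ℝ (⊤ : ℕ∞) (fun q => f q * g q) := by
  have h := ((mulB n).contDiff.comp hf).clm_apply hg
  exact h

theorem contDiff_smulM {n : ℕ} {f : P3 → Mat n} (c : ℂ) (hf : ContDiff ℝ (⊤ : ℕ∞) f) :
    ContDiff ℝ (⊤ : ℕ∞) (fun q => c • f q) := hf.const_smul c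

theorem contDiff_fd {n : ℕ} {f : P3 → Mat n} (hf : ContDiff ℝ (⊤ : ℕ∞) f) (v : P3) :
    ContDiff ℝ (⊤ : ℕ∞) (fun q => fderiv ℝ f q v) :=
  (hf.fderiv_right (m := (⊤ : ℕ∞)) (by simp)).clm_apply contDiff_const

theorem dAt {n : ℕ} {f : P3 → Mat n} (hf : ContDiff ℝ (⊤ : ℕ∞) f) (p : P3) :
    DifferentiableAt ℝ f p := hf.differentiable (by simp) p

theorem contDiff_L {n : ℕ} {f : P3 → Mat n} (a b c : ℂ) (hf : ContDiff ℝ (⊤ : ℕ∞) f) :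
    ContDiff ℝ (⊤ : ℕ∞) (Lop a b c f) :=
  ((contDiff_smulM a (contDiff_fd hf _)).add (contDiff_smulM b (contDiff_fd hf _))).add
    (contDiff_smulM c (contDiff_fd hf _))

theorem fd_comm_gen {W : Type*} [NormedAddCommGroup W] [NormedSpace ℝ W] {f : P3 → W}
    (hf : ContDiff ℝ (⊤ : ℕ∞) f) (p v w : P3) :
    fderiv ℝ (fun q => fderiv ℝ f q v) p w = fderiv ℝ (fun q => fderiv ℝ f q w) p v := by
  have hd : DifferentiableAt ℝ (fderiv ℝ f) p :=
    (hf.fderiv_right (m := (⊤ : ℕ∞)) (by simp)).differentiable (by simp) p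
  have hs : IsSymmSndFDerivAt ℝ f p := by
    apply hf.contDiffAt.isSymmSndFDerivAt
    simp
    exact WithTop.coe_le_coe.2 le_top
  have e (u : P3) : ∀ z, fderiv ℝ (fun q => fderiv ℝ f q u) p z = fderiv ℝ (fderiv ℝ f) p z u := by
    intro z
    rw [fderiv_clm_apply hd (differentiableAt_const u)]
    simp
  rw [e, e]
  exact hs w v

theorem fd_comm {n : ℕ} {f : P3 → Mat n} (hf : ContDiff ℝ (⊤ : ℕ∞) f) (p v w : P3) :
    fderiv ℝ (fun q => fderiv ℝ f q v) p w = fderiv ℝ (fun q => fderiv ℝ f q w) p v :=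
  fd_comm_gen hf p v w

theorem L_add {n : ℕ} {f g : P3 → Mat n} (a b c : ℂ) (hf : ContDiff ℝ (⊤ : ℕ∞) f)
    (hg : ContDiff ℝ (⊤ : ℕ∞) g) (p : P3) :
    Lop a b c (fun q => f q + g q) p = Lop a b c f p + Lop a b c g p := by
  simp only [Lop]
  have h : fderiv ℝ (fun q => f q + g q) p = fderiv ℝ f p + fderiv ℝ g p :=
    ((dAt hf p).hasFDerivAt.add (dAt hg p).hasFDerivAt).fderiv
  rw [h]
  simp only [ContinuousLinearMap.add_apply]
  module

theorem L_sub {n : ℕ} {f g : P3 → Mat n} (a b c : ℂ) (hf : ContDiff ℝ (⊤ : ℕ∞) f)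
    (hg : ContDiff ℝ (⊤ : ℕ∞) g) (p : P3) :
    Lop a b c (fun q => f q - g q) p = Lop a b c f p - Lop a b c g p := by
  simp only [Lop]
  have h : fderiv ℝ (fun q => f q - g q) p = fderiv ℝ f p - fderiv ℝ g p :=
    ((dAt hf p).hasFDerivAt.sub (dAt hg p).hasFDerivAt).fderiv
  rw [h]
  simp only [ContinuousLinearMap.sub_apply]
  module

theorem L_smul {n : ℕ} {f : P3 → Mat n} (a b c d : ℂ) (hf : ContDiff ℝ (⊤ : ℕ∞) f) (p : P3) :
    Lop a b c (fun q => d • f q) p = d • Lop a b c f p := by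
  simp only [Lop]
  have h : ∀ v, fderiv ℝ (fun q => d • f q) p v = d • fderiv ℝ f p v := by
    intro v
    have h2 : fderiv ℝ (fun q => d • f q) p = _ :=
      ((dAt hf p).hasFDerivAt.const_smul d).fderiv
    rw [h2]
    rfl
  simp only [h]
  module

theorem Lop_mul_rule {n : ℕ} {f g : P3 → Mat n} (a b c : ℂ) (hf : ContDiff ℝ (⊤ : ℕ∞) f)
    (hg : ContDiff ℝ (⊤ : ℕ∞) g) (p : P3) :
    Lop a b c (fun q => f q * g q) p = f p * Lop a b c g p + Lop a b c f p * g p := by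
  simp only [Lop, hasFDerivAt_mulM (dAt hf p) (dAt hg p), mul_add, add_mul, smul_add,
    mul_smul_comm, smul_mul_assoc]
  module

theorem L_comm {n : ℕ} {f : P3 → Mat n} (a b c a' b' c' : ℂ) (hf : ContDiff ℝ (⊤ : ℕ∞) f) (p : P3) :
    Lop a b c (Lop a' b' c' f) p = Lop a' b' c' (Lop a b c f) p := by
  have e (a b c a' b' c' : ℂ) : Lop a b c (Lop a' b' c' f) p =
      a' • Lop a b c (fun q => fderiv ℝ f q (1, 0, 0)) p
      + b' • Lop a b c (fun q => fderiv ℝ f q (0, 1, 0)) p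
      + c' • Lop a b c (fun q => fderiv ℝ f q (0, 0, 1)) p := by
    have h1 := contDiff_fd hf (1, 0, 0)
    have h2 := contDiff_fd hf (0, 1, 0)
    have h3 := contDiff_fd hf (0, 0, 1)
    rw [← L_smul _ _ _ _ h1, ← L_smul _ _ _ _ h2, ← L_smul _ _ _ _ h3,
      ← L_add _ _ _ (contDiff_smulM _ h1) (contDiff_smulM _ h2),
      ← L_add _ _ _ ((contDiff_smulM _ h1).add (contDiff_smulM _ h2)) (contDiff_smulM _ h3)]
    rfl
  rw [e, e]
  simp only [Lop]
  rw [fd_comm hf p (0, 1, 0) (1, 0, 0), fd_comm hf p (0, 0, 1) (1, 0, 0),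
    fd_comm hf p (0, 0, 1) (0, 1, 0)]
  module

theorem pdx_eq {n : ℕ} {f : P3 → Mat n} (hf : ContDiff ℝ (⊤ : ℕ∞) f) (p : P3) :
    pdx f p = fderiv ℝ f p (1, 0, 0) := by
  have hc : HasDerivAt (fun s : ℝ => ((s, p.2.1, p.2.2) : P3)) (1, 0, 0) p.1 :=
    (hasDerivAt_id p.1).prodMk ((hasDerivAt_const _ _).prodMk (hasDerivAt_const _ _))
  exact (HasFDerivAt.comp_hasDerivAt (l := f) p.1 (dAt hf p).hasFDerivAt hc).deriv

theorem pdy_eq {n : ℕ} {f : P3 → Mat n} (hf : ContDiff ℝ (⊤ : ℕ∞) f) (p : P3) :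
    pdy f p = fderiv ℝ f p (0, 1, 0) := by
  have hc : HasDerivAt (fun s : ℝ => ((p.1, s, p.2.2) : P3)) (0, 1, 0) p.2.1 :=
    (hasDerivAt_const _ _).prodMk ((hasDerivAt_id p.2.1).prodMk (hasDerivAt_const _ _))
  exact (HasFDerivAt.comp_hasDerivAt (l := f) p.2.1 (dAt hf p).hasFDerivAt hc).deriv

theorem pdt_eq {n : ℕ} {f : P3 → Mat n} (hf : ContDiff ℝ (⊤ : ℕ∞) f) (p : P3) :
    pdt f p = fderiv ℝ f p (0, 0, 1) := by
  have hc : HasDerivAt (fun s : ℝ => ((p.1, p.2.1, s) : P3)) (0, 0, 1) p.2.2 :=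
    (hasDerivAt_const _ _).prodMk ((hasDerivAt_const _ _).prodMk (hasDerivAt_id p.2.2))
  exact (HasFDerivAt.comp_hasDerivAt (l := f) p.2.2 (dAt hf p).hasFDerivAt hc).deriv

theorem abstract_comm {n : ℕ} {P Q E : P3 → Mat n} (a b c a' b' c' : ℂ)
    (hP : ContDiff ℝ (⊤ : ℕ∞) P) (hQ : ContDiff ℝ (⊤ : ℕ∞) Q) (hE : ContDiff ℝ (⊤ : ℕ∞) E)
    (p : P3) :
    (Lop a b c (fun q => Lop a' b' c' E q - Q q * E q) p - P p * (Lop a' b' c' E p - Q p * E p)) -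
    (Lop a' b' c' (fun q => Lop a b c E q - P q * E q) p - Q p * (Lop a b c E p - P p * E p)) =
    (Lop a' b' c' P p - Lop a b c Q p + P p * Q p - Q p * P p) * E p := by
  rw [L_sub _ _ _ (contDiff_L _ _ _ hE) (contDiff_mulM hQ hE),
    L_sub _ _ _ (contDiff_L _ _ _ hE) (contDiff_mulM hP hE), Lop_mul_rule _ _ _ hQ hE,
    Lop_mul_rule _ _ _ hP hE, L_comm a b c a' b' c' hE]
  noncomm_ring

def PP {n : ℕ} (Ax Ay At Ph : P3 → Mat n) (μ : ℂ) (p : P3) : Mat n :=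
  (2⁻¹ : ℂ) • (At p + Complex.I • Ph p) + μ • ((2⁻¹ : ℂ) • (Ax p - Complex.I • Ay p))

def QQ {n : ℕ} (Ax Ay At Ph : P3 → Mat n) (μ : ℂ) (p : P3) : Mat n :=
  (2⁻¹ : ℂ) • (At p - Complex.I • Ph p) + μ⁻¹ • ((2⁻¹ : ℂ) • (Ax p + Complex.I • Ay p))

theorem DOne_eq {n : ℕ} (Ax Ay At Ph : P3 → Mat n) (μ : ℂ) {E : P3 → Mat n}
    (hE : ContDiff ℝ (⊤ : ℕ∞) E) :
    DOneOp Ax Ay At Ph μ E =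
      fun q => Lop (μ / 2) (-(μ * Complex.I / 2)) 2⁻¹ E q - PP Ax Ay At Ph μ q * E q := by
  funext p
  simp only [DOneOp, PP, pdz, Lop, pdx_eq hE, pdy_eq hE, pdt_eq hE]
  congr 1
  module

theorem DTwo_eq {n : ℕ} (Ax Ay At Ph : P3 → Mat n) (μ : ℂ) {E : P3 → Mat n}
    (hE : ContDiff ℝ (⊤ : ℕ∞) E) :
    DTwoOp Ax Ay At Ph μ E =
      fun q => Lop (μ⁻¹ / 2) (μ⁻¹ * Complex.I / 2) 2⁻¹ E q - QQ Ax Ay At Ph μ q * E q := by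
  funext p
  simp only [DTwoOp, QQ, pdzbar, Lop, pdx_eq hE, pdy_eq hE, pdt_eq hE]
  congr 1
  module

def M0 {n : ℕ} (Ax Ay At Ph : P3 → Mat n) (p : P3) : Mat n :=
  -(pdx Ay p) + pdy Ax p + brk (Ax p) (Ay p) + (pdt Ph p - brk (At p) (Ph p))
def M1 {n : ℕ} (Ax Ay At Ph : P3 → Mat n) (p : P3) : Mat n :=
  -(pdx At p) + pdt Ax p + brk (Ax p) (At p) + (pdy Ph p - brk (Ay p) (Ph p))
def M2 {n : ℕ} (Ax Ay At Ph : P3 → Mat n) (p : P3) : Mat n :=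
  -(pdy At p) + pdt Ay p + brk (Ay p) (At p) - (pdx Ph p - brk (Ax p) (Ph p))

theorem comm_formula {n : ℕ} {Ax Ay At Ph : P3 → Mat n}
    (hxs : ContDiff ℝ (⊤ : ℕ∞) Ax) (hys : ContDiff ℝ (⊤ : ℕ∞) Ay)
    (hts : ContDiff ℝ (⊤ : ℕ∞) At) (hps : ContDiff ℝ (⊤ : ℕ∞) Ph)
    {μ : ℂ} (hμ : μ ≠ 0) {E : P3 → Mat n} (hE : ContDiff ℝ (⊤ : ℕ∞) E) (p : P3) :
    DOneOp Ax Ay At Ph μ (DTwoOp Ax Ay At Ph μ E) p -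
          DTwoOp Ax Ay At Ph μ (DOneOp Ax Ay At Ph μ E) p =
    ((Complex.I / 2) • M0 Ax Ay At Ph p + (μ / 4) • (M1 Ax Ay At Ph p - Complex.I • M2 Ax Ay At Ph p)
      - (μ⁻¹ / 4) • (M1 Ax Ay At Ph p + Complex.I • M2 Ax Ay At Ph p)) * E p := by
  have hiP := contDiff_smulM Complex.I hps
  have hiY := contDiff_smulM Complex.I hys
  have h1 := contDiff_smulM 2⁻¹ (hts.add hiP)
  have h2 := contDiff_smulM 2⁻¹ (hts.sub hiP)
  have h3 := contDiff_smulM 2⁻¹ (hxs.sub hiY)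
  have h4 := contDiff_smulM 2⁻¹ (hxs.add hiY)
  have hP : ContDiff ℝ (⊤ : ℕ∞) (PP Ax Ay At Ph μ) := h1.add (contDiff_smulM μ h3)
  have hQ : ContDiff ℝ (⊤ : ℕ∞) (QQ Ax Ay At Ph μ) := h2.add (contDiff_smulM μ⁻¹ h4)
  have eP (a b c : ℂ) : Lop a b c (PP Ax Ay At Ph μ) p =
      (2⁻¹ : ℂ) • (Lop a b c At p + Complex.I • Lop a b c Ph p) +
        μ • ((2⁻¹ : ℂ) • (Lop a b c Ax p - Complex.I • Lop a b c Ay p)) := by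
    rw [← L_smul _ _ _ _ hps, ← L_smul _ _ _ _ hys, ← L_add _ _ _ hts hiP, ← L_sub _ _ _ hxs hiY,
      ← L_smul _ _ _ _ (hts.add hiP), ← L_smul _ _ _ _ (hxs.sub hiY), ← L_smul _ _ _ _ h3,
      ← L_add _ _ _ h1 (contDiff_smulM μ h3)]
    rfl
  have eQ (a b c : ℂ) : Lop a b c (QQ Ax Ay At Ph μ) p =
      (2⁻¹ : ℂ) • (Lop a b c At p - Complex.I • Lop a b c Ph p) +
        μ⁻¹ • ((2⁻¹ : ℂ) • (Lop a b c Ax p + Complex.I • Lop a b c Ay p)) := by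
    rw [← L_smul _ _ _ _ hps, ← L_smul _ _ _ _ hys, ← L_sub _ _ _ hts hiP, ← L_add _ _ _ hxs hiY,
      ← L_smul _ _ _ _ (hts.sub hiP), ← L_smul _ _ _ _ (hxs.add hiY), ← L_smul _ _ _ _ h4,
      ← L_add _ _ _ h2 (contDiff_smulM μ⁻¹ h4)]
    rfl
  rw [DTwo_eq Ax Ay At Ph μ hE, DOne_eq Ax Ay At Ph μ hE,
    DOne_eq Ax Ay At Ph μ ((contDiff_L _ _ _ hE).sub (contDiff_mulM hQ hE)),
    DTwo_eq Ax Ay At Ph μ ((contDiff_L _ _ _ hE).sub (contDiff_mulM hP hE)),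
    abstract_comm _ _ _ _ _ _ hP hQ hE p, eP, eQ]
  congr 1
  simp only [Lop, PP, QQ, M0, M1, M2, brk, pdx_eq hxs, pdx_eq hys, pdx_eq hts, pdx_eq hps,
    pdy_eq hxs, pdy_eq hys, pdy_eq hts, pdy_eq hps, pdt_eq hxs, pdt_eq hys, pdt_eq hts, pdt_eq hps,
    mul_add, add_mul, mul_sub, sub_mul, smul_add, smul_sub, mul_smul_comm, smul_mul_assoc]
  match_scalars <;> field_simp <;> ring_nf <;> (try simp only [Complex.I_sq]) <;> (try ring)

/-- `(A, φ)` solves the space-time monopole equation iff for every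
`μ ∈ ℂ∖{0}` the operators `D₁(μ)` and `D₂(μ)` commute on all smooth maps `E : ℝ³ → Mₙ(ℂ)`. -/
theorem monopole_lax_mu {n : ℕ} (Ax Ay At Ph : P3 → Mat n)
    (hxs : ContDiff ℝ (⊤ : ℕ∞) Ax) (hys : ContDiff ℝ (⊤ : ℕ∞) Ay)
    (hts : ContDiff ℝ (⊤ : ℕ∞) At) (hps : ContDiff ℝ (⊤ : ℕ∞) Ph)
    (hxa : SkewHerm Ax) (hya : SkewHerm Ay) (hta : SkewHerm At) (hpa : SkewHerm Ph) :
    MonopoleEq Ax Ay At Ph ↔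
      (∀ μ : ℂ, μ ≠ 0 → ∀ E : P3 → Mat n, ContDiff ℝ (⊤ : ℕ∞) E → ∀ p : P3,
        DOneOp Ax Ay At Ph μ (DTwoOp Ax Ay At Ph μ E) p =
          DTwoOp Ax Ay At Ph μ (DOneOp Ax Ay At Ph μ E) p) := by
  have key : ∀ p, MonopoleEqAt Ax Ay At Ph p ↔
      (M0 Ax Ay At Ph p = 0 ∧ M1 Ax Ay At Ph p = 0 ∧ M2 Ax Ay At Ph p = 0) := by
    intro p
    simp only [MonopoleEqAt, M0, M1, M2]
    rw [eq_neg_iff_add_eq_zero, eq_neg_iff_add_eq_zero, sub_eq_zero (b := pdx Ph p - _)]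
  constructor
  · intro h μ hμ E hE p
    obtain ⟨h0, h1, h2⟩ := (key p).1 (h p)
    rw [← sub_eq_zero, comm_formula hxs hys hts hps hμ hE p, h0, h1, h2]
    simp
  · intro h p
    rw [key p]
    have hc : ∀ μ : ℂ, μ ≠ 0 → (Complex.I / 2) • M0 Ax Ay At Ph p +
        (μ / 4) • (M1 Ax Ay At Ph p - Complex.I • M2 Ax Ay At Ph p)
        - (μ⁻¹ / 4) • (M1 Ax Ay At Ph p + Complex.I • M2 Ax Ay At Ph p) = 0 := by
      intro μ hμ
      have h1 := comm_formula hxs hys hts hps hμ (E := fun _ => 1) contDiff_const p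
      rw [sub_eq_zero.2 (h μ hμ _ contDiff_const p), mul_one] at h1
      exact h1.symm
    have a1 := hc 1 one_ne_zero
    have a2 := hc (-1) (by simp)
    have a3 := hc Complex.I Complex.I_ne_zero
    rw [Complex.inv_I] at a3
    generalize M0 Ax Ay At Ph p = X at *
    generalize M1 Ax Ay At Ph p = Y at *
    generalize M2 Ax Ay At Ph p = Z at *
    have hX : X = 0 := by
      have : X = (-Complex.I) • ((Complex.I / 2) • X + ((1:ℂ) / 4) • (Y - Complex.I • Z)
        - ((1:ℂ)⁻¹ / 4) • (Y + Complex.I • Z)) + (-Complex.I) • ((Complex.I / 2) • X + ((-1:ℂ) / 4) • (Y - Complex.I • Z)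
        - ((-1:ℂ)⁻¹ / 4) • (Y + Complex.I • Z)) := by
        match_scalars <;> ring_nf <;> simp
      rw [this, a1, a2]; simp
    subst hX
    have hZ : Z = 0 := by
      have : Z = (2 * Complex.I) • ((Complex.I / 2) • (0 : Mat n) + ((1:ℂ) / 4) • (Y - Complex.I • Z)
        - ((1:ℂ)⁻¹ / 4) • (Y + Complex.I • Z)) := by
        match_scalars <;> ring_nf <;> simp
      rw [this, a1]; simp
    subst hZ
    refine ⟨rfl, ?_, rfl⟩
    have : Y = (-2 * Complex.I) • ((Complex.I / 2) • (0 : Mat n) + (Complex.I / 4) • (Y - Complex.I • (0 : Mat n))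
        - (-Complex.I / 4) • (Y + Complex.I • (0 : Mat n))) := by
      match_scalars <;> ring_nf <;> simp
    rw [this, a3]; simp
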